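/- Let x > 0 be a real number such that x = x₁ − x₂ for some left-computable reals x₁, x₂ > 0, and suppose x is neither left-computable nor right-computable. Let σ₁² > 0 and σ₂² > 0 be computable reals. Then there exist continuous, even, nonnegative integrable functions f₁, f₂ : ℝ → ℝ with f_i(α) = 0 for |α| ≤ 1 and ∫_ℝ f_i(α) dα = 1 (i = 1, 2) such that for every computable real P > 0 the functions α ↦ log₂(1 + Pα²/σ_i²)·f_i(α) are integrable on ℝ and the secrecy capacity C_S(P) = ∫_ℝ log₂(1 + Pα²/σ₁²) f₁(α) dα − ∫_ℝ log₂(1 + Pα²/σ₂²) f₂(α) dα satisfies C_S(P) = x + u(P) for some computable real u(P); consequently C_S(P) belongs to the class Δ₂, C_S(P) is not left-computable, and C_S(P) is not right-computable. -/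

import Mathlib

open Filter MeasureTheory

/-- A real number `x` is computable if there is a computable sequence of rationals
approximating it to precision `2^(-n)`. -/
def IsComputableReal (x : ℝ) : Prop :=
  ∃ q : ℕ → ℚ, Computable q ∧ ∀ n : ℕ, |x - (q n : ℝ)| ≤ 2 ^ (-(n : ℤ))

/-- A real number `x` is left-computable (`Σ₁`) if it is the limit of a
monotonically nondecreasing computable sequence of rationals. -/
def LeftComputable (x : ℝ) : Prop :=
  ∃ q : ℕ → ℚ, Computable q ∧ (∀ n, q n ≤ q (n + 1)) ∧
    Tendsto (fun n => (q n : ℝ)) atTop (nhds x)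

/-- A real number `x` is right-computable (`Π₁`) if it is the limit of a
monotonically nonincreasing computable sequence of rationals. -/
def RightComputable (x : ℝ) : Prop :=
  ∃ q : ℕ → ℚ, Computable q ∧ (∀ n, q (n + 1) ≤ q n) ∧
    Tendsto (fun n => (q n : ℝ)) atTop (nhds x)

/-- `x ∈ Δ₂` iff `x` is a difference of two left-computable reals. -/
def Delta2 (x : ℝ) : Prop :=
  ∃ a b : ℝ, LeftComputable a ∧ LeftComputable b ∧ x = a - b


theorem cr_nat_pow : Primrec₂ (fun a b : ℕ => a ^ b) :=
  Primrec₂.unpaired'.1 Nat.Primrec.pow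

theorem cr_dvd : PrimrecRel (fun a b : ℕ => a ∣ b) := by
  have : PrimrecRel (fun a b : ℕ => b % a = 0) :=
    Primrec.eq.comp₂ (Primrec.nat_mod.comp₂ Primrec₂.right Primrec₂.left) (Primrec₂.const 0)
  exact this.of_eq (fun a b => (Nat.dvd_iff_mod_eq_zero).symm)

theorem cr_gcd : Primrec₂ (fun a b : ℕ => Nat.gcd a b) := by
  have h : Primrec (fun p : ℕ × ℕ =>
      Nat.findGreatest (fun k => k ∣ p.1 ∧ k ∣ p.2) (p.1 + p.2)) := by
    refine Primrec.nat_findGreatest (Primrec.nat_add.comp Primrec.fst Primrec.snd) ?_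
    exact PrimrecPred.and
      (cr_dvd.comp Primrec.snd (Primrec.fst.comp Primrec.fst))
      (cr_dvd.comp Primrec.snd (Primrec.snd.comp Primrec.fst))
  refine h.of_eq ?_
  rintro ⟨a, b⟩
  simp only
  rw [Nat.findGreatest_eq_iff]
  refine ⟨?_, ?_, ?_⟩
  · rcases Nat.eq_zero_or_pos a with rfl | ha
    · simp
    · exact (Nat.gcd_le_left b ha).trans (by omega)
  · intro _
    exact ⟨Nat.gcd_dvd_left a b, Nat.gcd_dvd_right a b⟩
  · rintro n h1 h2 ⟨h3, h4⟩
    have h5 := Nat.dvd_gcd h3 h4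
    rcases Nat.eq_zero_or_pos (Nat.gcd a b) with h0 | h0
    · rw [Nat.gcd_eq_zero_iff] at h0
      omega
    · exact absurd (Nat.le_of_dvd h0 h5) (by omega)

theorem cr_log : Primrec (fun n : ℕ => Nat.log 2 n) := by
  have h : Primrec (fun p : ℕ =>
      Nat.findGreatest (fun k => 2 ^ k ≤ p) p) := by
    refine Primrec.nat_findGreatest Primrec.id ?_
    exact Primrec.nat_le.comp (cr_nat_pow.comp (Primrec.const 2) Primrec.snd) Primrec.fst
  refine h.of_eq ?_
  intro n
  rw [Nat.findGreatest_eq_iff]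
  refine ⟨Nat.log_le_self 2 n, ?_, ?_⟩
  · intro h
    exact Nat.pow_log_le_self 2 (by rintro rfl; simp at h)
  · intro k h1 h2 h3
    have := Nat.le_log_of_pow_le (by norm_num) h3
    omega

/-- the set of codes of reduced fractions -/
def crS (n : ℕ) : Prop :=
  0 < n.unpair.2 ∧ Nat.gcd (Denumerable.ofNat ℤ n.unpair.1).natAbs n.unpair.2 = 1

instance : DecidablePred crS := fun n => by unfold crS; infer_instance

theorem int_encode_ofNat (n : ℕ) : Encodable.encode (Int.ofNat n) = 2 * n := rfl
theorem int_encode_negSucc (n : ℕ) : Encodable.encode (Int.negSucc n) = 2 * n + 1 := rfl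

theorem cr_toNat : Primrec (fun z : ℤ => z.toNat) := by
  have h : Primrec (fun z : ℤ => if Encodable.encode z % 2 = 0 then Encodable.encode z / 2 else 0) := by
    refine Primrec.ite (Primrec.eq.comp (Primrec.nat_mod.comp Primrec.encode (Primrec.const 2)) (Primrec.const 0)) (Primrec.nat_div.comp Primrec.encode (Primrec.const 2)) (Primrec.const 0)
  refine h.of_eq ?_
  rintro (n | n)
  · rw [int_encode_ofNat]; simp
  · rw [int_encode_negSucc]
    rw [if_neg (by omega)]; simp

theorem cr_toNatNeg : Primrec (fun z : ℤ => (-z).toNat) := by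
  have h : Primrec (fun z : ℤ => if Encodable.encode z % 2 = 0 then 0 else (Encodable.encode z + 1) / 2) := by
    refine Primrec.ite (Primrec.eq.comp (Primrec.nat_mod.comp Primrec.encode (Primrec.const 2)) (Primrec.const 0)) (Primrec.const 0) (Primrec.nat_div.comp (Primrec.succ.comp Primrec.encode) (Primrec.const 2))
  refine h.of_eq ?_
  rintro (n | n)
  · rw [int_encode_ofNat]; simp
  · rw [int_encode_negSucc]
    rw [if_neg (by omega)]
    have : -Int.negSucc n = ((n + 1 : ℕ) : ℤ) := rfl
    rw [this, Int.toNat_natCast]; omega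

theorem cr_natAbs : Primrec (fun z : ℤ => z.natAbs) := by
  refine (Primrec.nat_add.comp cr_toNat cr_toNatNeg).of_eq ?_
  intro z; omega

theorem cr_intSub : Primrec₂ (fun a b : ℕ => (a : ℤ) - b) := by
  apply Primrec₂.encode_iff.1
  have h : Primrec (fun p : ℕ × ℕ => if p.2 ≤ p.1 then 2 * (p.1 - p.2) else 2 * (p.2 - p.1) - 1) := by
    refine Primrec.ite (Primrec.nat_le.comp Primrec.snd Primrec.fst) ?_ ?_
    · exact Primrec.nat_mul.comp (Primrec.const 2) (Primrec.nat_sub.comp Primrec.fst Primrec.snd)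
    · exact Primrec.nat_sub.comp (Primrec.nat_mul.comp (Primrec.const 2) (Primrec.nat_sub.comp Primrec.snd Primrec.fst)) (Primrec.const 1)
  refine h.of_eq ?_
  rintro ⟨a, b⟩
  simp only
  split_ifs with h
  · have : (a : ℤ) - b = Int.ofNat (a - b) := by simp; omega
    rw [this, int_encode_ofNat]
  · have : (a : ℤ) - b = Int.negSucc (b - a - 1) := by omega
    rw [this, int_encode_negSucc]; omega

theorem crS_prim : PrimrecPred crS := by
  unfold crS
  refine PrimrecPred.and (Primrec.nat_lt.comp (Primrec.const 0) (Primrec.snd.comp Primrec.unpair)) ?_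
  refine Primrec.eq.comp (cr_gcd.comp (cr_natAbs.comp ((Primrec.ofNat ℤ).comp (Primrec.fst.comp Primrec.unpair))) (Primrec.snd.comp Primrec.unpair)) (Primrec.const 1)

/-- number of codes below n -/
def crC (n : ℕ) : ℕ := Nat.rec 0 (fun k c => if crS k then c + 1 else c) n

theorem crC_prim : Primrec crC := by
  refine Primrec.nat_rec₁ 0 ?_
  exact Primrec.ite (crS_prim.comp Primrec.fst) (Primrec.succ.comp Primrec.snd) Primrec.snd

theorem crC_eq (n : ℕ) : crC n = ((Finset.range n).filter crS).card := by
  induction n with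
  | zero => rfl
  | succ n ih =>
    have : crC (n+1) = if crS n then crC n + 1 else crC n := rfl
    rw [this, Finset.range_add_one, Finset.filter_insert]
    split_ifs with h
    · rw [Finset.card_insert_of_notMem (by simp), ih]
    · exact ih

theorem crC_lt {a b : ℕ} (ha : crS a) (h : a < b) : crC a < crC b := by
  rw [crC_eq, crC_eq]
  apply Finset.card_lt_card
  rw [Finset.ssubset_iff_of_subset]
  · exact ⟨a, by simp [ha, h], by simp⟩
  · intro x; simp; intro h1 h2; exact ⟨by omega, h2⟩

theorem crC_inj {a b : ℕ} (ha : crS a) (hb : crS b) (h : crC a = crC b) : a = b := by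
  rcases lt_trichotomy a b with h1 | h1 | h1
  · have := crC_lt ha h1; omega
  · exact h1
  · have := crC_lt hb h1; omega

/-- raw code of a rational -/
def crE (q : ℚ) : ℕ := Nat.pair (Encodable.encode q.num) q.den

theorem crE_S (q : ℚ) : crS (crE q) := by
  unfold crS crE
  rw [Nat.unpair_pair]
  refine ⟨q.den_pos, ?_⟩
  dsimp only
  rw [Denumerable.ofNat_encode]
  exact q.reduced

theorem crE_surj (n : ℕ) (h : crS n) : ∃ q : ℚ, crE q = n := by
  refine ⟨⟨Denumerable.ofNat ℤ n.unpair.1, n.unpair.2, h.1.ne', h.2⟩, ?_⟩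
  unfold crE
  dsimp only
  rw [Denumerable.encode_ofNat, Nat.pair_unpair]


theorem crE_eq (q : ℚ) : @Encodable.encode ℚ Rat.instEncodable q = crE q := rfl

theorem subtype_encode (s : Set ℕ) [DecidablePred (· ∈ s)] [Infinite s] (x : s) :
    @Encodable.encode s (Nat.Subtype.denumerable s).toEncodable x
      = (List.range x).countP (· ∈ s) := rfl

theorem rat_encode (q : ℚ) :
    @Encodable.encode ℚ (Primcodable.toEncodable) q = crC (crE q) := by
  rw [crC_eq]
  let := @Encodable.decidableRangeEncode ℚ Rat.instEncodable
  let : Infinite (Set.range (@Encodable.encode ℚ Rat.instEncodable)) :=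
    Infinite.of_injective _ (Equiv.ofInjective _ Encodable.encode_injective).injective
  have h : @Encodable.encode ℚ (Primcodable.toEncodable) q =
    @Encodable.encode _ (Nat.Subtype.denumerable
      (Set.range (@Encodable.encode ℚ Rat.instEncodable))).toEncodable ⟨crE q, ⟨q, rfl⟩⟩ := rfl
  rw [h, subtype_encode, List.countP_eq_length_filter]
  have h2 : ∀ n, n ∈ Set.range (@Encodable.encode ℚ Rat.instEncodable) ↔ crS n := by
    intro n
    constructor
    · rintro ⟨q, rfl⟩
      exact crE_S q
    · intro h
      obtain ⟨q, rfl⟩ := crE_surj n h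
      exact ⟨q, rfl⟩
  simp only [h2]
  rfl

theorem cr_of_num_den {α : Type*} [Primcodable α] {f : α → ℚ}
    (h1 : Computable fun a => (f a).num) (h2 : Computable fun a => (f a).den) : Computable f := by
  apply Computable.encode_iff.1
  refine Computable.of_eq (f := fun a => crC (crE (f a))) ?_ (fun a => (rat_encode _).symm)
  exact crC_prim.to_comp.comp
    (Primrec₂.natPair.to_comp.comp (Computable.encode.comp h1) h2)

theorem cr_of_graph {α : Type*} [Primcodable α] {f : α → ℕ} {r : α → ℕ → Bool}
    (hr : Computable₂ r) (h : ∀ a n, r a n = true ↔ n = f a) : Computable f := by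
  have hp : Partrec (fun a : α => Nat.rfind (fun n => (Part.some (r a n) : Part Bool))) :=
    Partrec.rfind hr.partrec₂
  refine Partrec.of_eq hp ?_
  intro a
  apply Part.eq_some_iff.2
  refine Nat.mem_rfind.2 ⟨?_, ?_⟩
  · apply Part.mem_some_iff.2
    exact ((h a _).2 rfl).symm
  · intro m hm
    apply Part.mem_some_iff.2
    cases hb : r a m with
    | false => rfl
    | true => exact absurd ((h a m).1 hb) hm.ne

theorem crE_comp : Computable crE := by
  have h : Computable₂ (fun (q : ℚ) (n : ℕ) =>
      decide (crS n ∧ crC n = @Encodable.encode ℚ (Primcodable.toEncodable) q)) := by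
    apply Primrec.to_comp
    apply PrimrecPred.decide
    exact PrimrecPred.and (crS_prim.comp Primrec.snd)
      (Primrec.eq.comp (crC_prim.comp Primrec.snd) (Primrec.encode.comp Primrec.fst))
  refine cr_of_graph h ?_
  intro q n
  rw [decide_eq_true_iff, rat_encode]
  constructor
  · rintro ⟨h1, h2⟩
    exact crC_inj h1 (crE_S q) h2
  · rintro rfl
    exact ⟨crE_S q, rfl⟩

theorem cr_num : Computable (fun q : ℚ => q.num) := by
  have h : Computable (fun q : ℚ => Denumerable.ofNat ℤ (crE q).unpair.1) :=
    (Computable.ofNat ℤ).comp (Computable.fst.comp (Computable.unpair.comp crE_comp))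
  refine h.of_eq ?_
  intro q
  unfold crE
  rw [Nat.unpair_pair, Denumerable.ofNat_encode]

theorem cr_den : Computable (fun q : ℚ => q.den) := by
  have h : Computable (fun q : ℚ => (crE q).unpair.2) :=
    (Computable.snd.comp (Computable.unpair.comp crE_comp))
  refine h.of_eq ?_
  intro q
  unfold crE
  rw [Nat.unpair_pair]

section
variable {α : Type*} [Primcodable α]

theorem c_add {f g : α → ℕ} (hf : Computable f) (hg : Computable g) :
    Computable (fun a => f a + g a) := Primrec.nat_add.to_comp.comp hf hg
theorem c_sub {f g : α → ℕ} (hf : Computable f) (hg : Computable g) :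
    Computable (fun a => f a - g a) := Primrec.nat_sub.to_comp.comp hf hg
theorem c_mul {f g : α → ℕ} (hf : Computable f) (hg : Computable g) :
    Computable (fun a => f a * g a) := Primrec.nat_mul.to_comp.comp hf hg
theorem c_div {f g : α → ℕ} (hf : Computable f) (hg : Computable g) :
    Computable (fun a => f a / g a) := Primrec.nat_div.to_comp.comp hf hg
theorem c_pow {f g : α → ℕ} (hf : Computable f) (hg : Computable g) :
    Computable (fun a => f a ^ g a) := cr_nat_pow.to_comp.comp hf hg
theorem c_gcd {f g : α → ℕ} (hf : Computable f) (hg : Computable g) :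
    Computable (fun a => Nat.gcd (f a) (g a)) := cr_gcd.to_comp.comp hf hg

theorem cq_mk {a b c : α → ℕ} (ha : Computable a) (hb : Computable b) (hc : Computable c) :
    Computable (fun t => ((a t : ℚ) - (b t : ℚ)) / ((c t : ℚ) + 1)) := by
  have key : ∀ a b c : ℕ, ((a : ℚ) - b) / ((c : ℚ) + 1) = Rat.divInt ((a : ℤ) - b) ((c + 1 : ℕ) : ℤ) := by
    intro a b c
    rw [Rat.divInt_eq_div]; push_cast; ring
  have hg : Computable (fun t => Nat.gcd ((a t - b t) + (b t - a t)) (c t + 1)) :=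
    c_gcd (c_add (c_sub ha hb) (c_sub hb ha)) (c_add hc (Computable.const 1))
  apply cr_of_num_den
  · have h : Computable (fun t => (((a t - b t) / (Nat.gcd ((a t - b t) + (b t - a t)) (c t + 1)) : ℕ) : ℤ)
        - (((b t - a t) / (Nat.gcd ((a t - b t) + (b t - a t)) (c t + 1)) : ℕ) : ℤ)) :=
      cr_intSub.to_comp.comp (c_div (c_sub ha hb) hg) (c_div (c_sub hb ha) hg)
    refine h.of_eq ?_
    intro t
    rw [key, Rat.num_divInt]
    have e1 : Int.gcd ((c t + 1 : ℕ) : ℤ) ((a t : ℤ) - b t) = Nat.gcd ((a t - b t) + (b t - a t)) (c t + 1) := by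
      rw [Int.gcd_comm, Int.gcd]
      congr 1
      omega
    rw [Int.sign_eq_one_of_pos (by positivity), one_mul, e1]
    rcases le_total (a t) (b t) with h | h
    · have : a t - b t = 0 := by omega
      rw [this]
      have e2 : (a t : ℤ) - b t = - ((b t - a t : ℕ) : ℤ) := by omega
      rw [e2, Int.neg_ediv_of_dvd]
      · simp
      · rw [zero_add]
        exact_mod_cast Nat.gcd_dvd_left _ _
    · have : b t - a t = 0 := by omega
      rw [this]
      have e2 : (a t : ℤ) - b t = ((a t - b t : ℕ) : ℤ) := by omega
      rw [e2]
      simp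
  · refine (c_div (c_add hc (Computable.const 1)) hg).of_eq ?_
    intro t
    rw [key, Rat.den_divInt]
    have e1 : Int.gcd ((c t + 1 : ℕ) : ℤ) ((a t : ℤ) - b t) = Nat.gcd ((a t - b t) + (b t - a t)) (c t + 1) := by
      rw [Int.gcd_comm, Int.gcd]
      congr 1
      omega
    rw [if_neg (by positivity), Int.natAbs_natCast, Int.gcd_comm ]
    rw [Int.gcd_comm, e1]

theorem cq_pos {f : α → ℚ} (hf : Computable f) : Computable (fun a => (f a).num.toNat) :=
  cr_toNat.to_comp.comp (cr_num.comp hf)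
theorem cq_neg' {f : α → ℚ} (hf : Computable f) : Computable (fun a => (-(f a).num).toNat) :=
  cr_toNatNeg.to_comp.comp (cr_num.comp hf)
theorem cq_den {f : α → ℚ} (hf : Computable f) : Computable (fun a => (f a).den) :=
  cr_den.comp hf

theorem rat_split (q : ℚ) : q = ((q.num.toNat : ℚ) - ((-q.num).toNat : ℚ)) / q.den := by
  have h : ((q.num.toNat : ℚ) - ((-q.num).toNat : ℚ)) = (q.num : ℚ) := by
    have : (q.num.toNat : ℤ) - ((-q.num).toNat : ℤ) = q.num := by omega
    exact_mod_cast congrArg (Int.cast : ℤ → ℚ) this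
  rw [h, Rat.num_div_den]

theorem cq_mk' {a b c : α → ℕ} (ha : Computable a) (hb : Computable b) (hc : Computable c)
    (h0 : ∀ t, 0 < c t) :
    Computable (fun t => ((a t : ℚ) - (b t : ℚ)) / (c t : ℚ)) := by
  refine (cq_mk ha hb (c_sub hc (Computable.const 1))).of_eq ?_
  intro t
  congr 1
  have := h0 t
  have h : (c t - 1) + 1 = c t := by omega
  exact_mod_cast congrArg (Nat.cast : ℕ → ℚ) h

theorem cq_natCast {f : α → ℕ} (hf : Computable f) : Computable (fun a => (f a : ℚ)) := by
  refine (cq_mk' hf (Computable.const 0) (Computable.const 1) (fun _ => one_pos)).of_eq ?_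
  intro t; simp

theorem cq_inv_nat {f : α → ℕ} (hf : Computable f) (h0 : ∀ t, 0 < f t) :
    Computable (fun a => 1 / (f a : ℚ)) := by
  refine (cq_mk' (Computable.const 1) (Computable.const 0) hf h0).of_eq ?_
  intro t; simp

theorem cq_neg {f : α → ℚ} (hf : Computable f) : Computable (fun a => - f a) := by
  refine (cq_mk' (cq_neg' hf) (cq_pos hf) (cq_den hf) (fun t => (f t).den_pos)).of_eq ?_
  intro t
  conv_rhs => rw [rat_split (f t)]
  ring

theorem cq_add {f g : α → ℚ} (hf : Computable f) (hg : Computable g) :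
    Computable (fun a => f a + g a) := by
  refine (cq_mk' (c_add (c_mul (cq_pos hf) (cq_den hg)) (c_mul (cq_pos hg) (cq_den hf)))
    (c_add (c_mul (cq_neg' hf) (cq_den hg)) (c_mul (cq_neg' hg) (cq_den hf)))
    (c_mul (cq_den hf) (cq_den hg))
    (fun t => mul_pos (f t).den_pos (g t).den_pos)).of_eq ?_
  intro t
  conv_rhs => rw [rat_split (f t), rat_split (g t)]
  have h1 : ((f t).den : ℚ) ≠ 0 := by exact_mod_cast (f t).den_pos.ne'
  have h2 : ((g t).den : ℚ) ≠ 0 := by exact_mod_cast (g t).den_pos.ne'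
  push_cast
  field_simp
  ring

theorem cq_sub {f g : α → ℚ} (hf : Computable f) (hg : Computable g) :
    Computable (fun a => f a - g a) := by
  refine (cq_add hf (cq_neg hg)).of_eq ?_
  intro t; ring

theorem cq_mul {f g : α → ℚ} (hf : Computable f) (hg : Computable g) :
    Computable (fun a => f a * g a) := by
  refine (cq_mk' (c_add (c_mul (cq_pos hf) (cq_pos hg)) (c_mul (cq_neg' hf) (cq_neg' hg)))
    (c_add (c_mul (cq_pos hf) (cq_neg' hg)) (c_mul (cq_neg' hf) (cq_pos hg)))
    (c_mul (cq_den hf) (cq_den hg))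
    (fun t => mul_pos (f t).den_pos (g t).den_pos)).of_eq ?_
  intro t
  conv_rhs => rw [rat_split (f t), rat_split (g t)]
  push_cast
  rw [div_mul_div_comm]
  ring

theorem cq_inv {f : α → ℚ} (hf : Computable f) (h0 : ∀ t, 0 < f t) :
    Computable (fun a => 1 / f a) := by
  refine (cq_mk' (cq_den hf) (Computable.const 0) (cq_pos hf) ?_).of_eq ?_
  · intro t
    have := Rat.num_pos.2 (h0 t)
    omega
  · intro t
    have h1 := Rat.num_pos.2 (h0 t)
    conv_rhs => rw [rat_split (f t)]
    have : (-(f t).num).toNat = 0 := by omega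
    rw [this]
    simp

theorem cq_sum {N : α → ℕ} {f : α → ℕ → ℚ} (hN : Computable N) (hf : Computable₂ f) :
    Computable (fun a => ∑ k ∈ Finset.range (N a), f a k) := by
  have h : Computable (fun a => (Nat.rec (0 : ℚ) (fun k s => s + f a k) (N a) : ℚ)) := by
    refine Computable.nat_rec hN (Computable.const 0)
      (h := fun (a : α) (p : ℕ × ℚ) => p.2 + f a p.1) ?_
    exact cq_add (Computable.snd.comp Computable.snd)
      (hf.comp Computable.fst (Computable.fst.comp Computable.snd))
  refine h.of_eq ?_
  intro a
  induction N a with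
  | zero => simp
  | succ n ih => rw [Finset.sum_range_succ, ← ih]

end


/-- tent function supported on `[1,3]` -/
noncomputable def tent (w : ℝ) : ℝ := max 0 (1 - |w - 2|)

theorem tent_cont : Continuous tent := by unfold tent; fun_prop
theorem tent_nonneg (w : ℝ) : 0 ≤ tent w := le_max_left _ _
theorem tent_le (w : ℝ) : tent w ≤ 1 := by
  unfold tent; apply max_le <;> [norm_num; linarith [abs_nonneg (w - 2)]]
theorem tent_left {w : ℝ} (h : w ≤ 1) : tent w = 0 := by
  unfold tent; apply max_eq_left; rw [abs_of_nonpos] <;> linarith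
theorem tent_right {w : ℝ} (h : 3 ≤ w) : tent w = 0 := by
  unfold tent; apply max_eq_left; rw [abs_of_nonneg] <;> linarith
theorem tent_12 {w : ℝ} (h1 : 1 ≤ w) (h2 : w ≤ 2) : tent w = w - 1 := by
  unfold tent; rw [abs_of_nonpos (by linarith), max_eq_right] <;> linarith
theorem tent_23 {w : ℝ} (h1 : 2 ≤ w) (h2 : w ≤ 3) : tent w = 3 - w := by
  unfold tent; rw [abs_of_nonneg (by linarith), max_eq_right] <;> linarith

theorem tent_integral (h : ℝ → ℝ) (hc : ContinuousOn h (Set.Icc 1 3)) :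
    ∫ w in Set.Ioi (0 : ℝ), h w * tent w =
      (∫ w in (1:ℝ)..2, h w * (w - 1)) + ∫ w in (2:ℝ)..3, h w * (3 - w) := by
  have e1 : ∫ w in Set.Ioi (0 : ℝ), h w * tent w = ∫ w, h w * tent w := by
    apply setIntegral_eq_integral_of_forall_compl_eq_zero
    intro w hw
    have : w ≤ 0 := by simpa using hw
    rw [tent_left (by linarith), mul_zero]
  have e2 : ∫ w in (1:ℝ)..3, h w * tent w = ∫ w, h w * tent w := by
    apply intervalIntegral.integral_eq_integral_of_support_subset
    intro w hw
    rw [Function.mem_support] at hw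
    constructor
    · by_contra h1
      exact hw (by rw [tent_left (by linarith), mul_zero])
    · by_contra h1
      exact hw (by rw [tent_right (by linarith), mul_zero])
  have hc' : ContinuousOn (fun w => h w * tent w) (Set.Icc 1 3) := hc.mul tent_cont.continuousOn
  rw [e1, ← e2, ← intervalIntegral.integral_add_adjacent_intervals (b := 2)]
  · congr 1
    · apply intervalIntegral.integral_congr
      intro w hw
      rw [Set.uIcc_of_le (by norm_num)] at hw
      simp only [tent_12 hw.1 hw.2]
    · apply intervalIntegral.integral_congr
      intro w hw
      rw [Set.uIcc_of_le (by norm_num)] at hw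
      simp only [tent_23 hw.1 hw.2]
  · apply ContinuousOn.intervalIntegrable
    rw [Set.uIcc_of_le (by norm_num)]
    exact hc'.mono (Set.Icc_subset_Icc_right (by norm_num))
  · apply ContinuousOn.intervalIntegrable
    rw [Set.uIcc_of_le (by norm_num)]
    exact hc'.mono (Set.Icc_subset_Icc_left (by norm_num))

theorem tent_mass : ∫ w in Set.Ioi (0 : ℝ), tent w = 1 := by
  have := tent_integral (fun _ => 1) continuousOn_const
  simp only [one_mul] at this
  rw [this, intervalIntegral.integral_sub (by simp) (by simp),
    intervalIntegral.integral_sub (by simp) (by simp)]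
  simp only [intervalIntegral.integral_const, integral_id]
  norm_num

noncomputable def G0 (y : ℝ) : ℝ := y ^ 2 * Real.logb 2 y
noncomputable def Th (z : ℝ) : ℝ := (G0 (z + 1) - 2 * G0 (z + 2) + G0 (z + 3)) / 2

theorem log_int (z p q a b : ℝ) (hz : 0 < z) (ha : 0 ≤ a) (hab : a ≤ b) :
    ∫ w in a..b, Real.log (z + w) * (p * (z + w) + q) =
      ((p * (z + b) ^ 2 / 2 + q * (z + b)) * Real.log (z + b) - p * (z + b) ^ 2 / 4 - q * (z + b)) -
      ((p * (z + a) ^ 2 / 2 + q * (z + a)) * Real.log (z + a) - p * (z + a) ^ 2 / 4 - q * (z + a)) := by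
  have hd : ∀ w ∈ Set.uIcc a b, HasDerivAt (fun w : ℝ => (p * (z + w) ^ 2 / 2 + q * (z + w)) * Real.log (z + w) - p * (z + w) ^ 2 / 4 - q * (z + w)) (Real.log (z + w) * (p * (z + w) + q)) w := by
    intro w hw
    rw [Set.uIcc_of_le hab] at hw
    have hw0 : z + w ≠ 0 := by have := hw.1; linarith
    have h1 : HasDerivAt (fun w : ℝ => z + w) 1 w := (hasDerivAt_id w).const_add z
    have h2 := h1.log hw0
    have h3 := h1.pow 2
    have h4 := ((((h3.const_mul p).div_const 2).add (h1.const_mul q)).mul h2).sub ((h3.const_mul p).div_const 4) |>.sub (h1.const_mul q)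
    refine h4.congr_deriv ?_
    simp
    field_simp
    ring
  rw [intervalIntegral.integral_eq_sub_of_hasDerivAt hd]
  apply ContinuousOn.intervalIntegrable
  rw [Set.uIcc_of_le hab]
  apply ContinuousOn.mul
  · apply ContinuousOn.log (by fun_prop)
    intro w hw
    have := hw.1; linarith
  · fun_prop

theorem tent_log (Y : ℝ) (hY : 0 < Y) :
    ∫ w in Set.Ioi (0 : ℝ), Real.logb 2 (1 + Y * w) * tent w
      = Real.logb 2 Y + Th (1 / Y) - 3 / (2 * Real.log 2) := by
  have hl2 : Real.log 2 ≠ 0 := (Real.log_pos (by norm_num)).ne'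
  have e : ∫ w in Set.Ioi (0 : ℝ), Real.logb 2 (1 + Y * w) * tent w
      = ∫ w in Set.Ioi (0 : ℝ), ((Real.logb 2 Y) * tent w + (1 / Real.log 2) * (Real.log (1 / Y + w) * tent w)) := by
    apply setIntegral_congr_fun measurableSet_Ioi
    intro w hw
    have hw : 0 < w := hw
    have : 1 + Y * w = Y * (1 / Y + w) := by field_simp
    simp only [this]
    rw [Real.logb_mul hY.ne' (by positivity)]
    simp only [Real.logb]
    ring
  have hz : 0 < 1 / Y := by positivity
  generalize 1 / Y = z at *
  have hct : HasCompactSupport tent := by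
    apply HasCompactSupport.of_support_subset_isCompact (isCompact_Icc (a := (1:ℝ)) (b := 3))
    intro w hw
    rw [Function.mem_support] at hw
    constructor
    · by_contra h1
      exact hw (tent_left (by linarith))
    · by_contra h1
      exact hw (tent_right (by linarith))
  have hti : Integrable tent := tent_cont.integrable_of_hasCompactSupport hct
  rw [e, integral_add, integral_const_mul, integral_const_mul, tent_mass, tent_integral]
  · have h1 := log_int z 1 (-(z + 1)) 1 2 hz (by norm_num) (by norm_num)
    have h2 := log_int z (-1) (z + 3) 2 3 hz (by norm_num) (by norm_num)
    have h1' : ∫ w in (1:ℝ)..2, Real.log (z + w) * (w - 1) = ∫ w in (1:ℝ)..2, Real.log (z + w) * (1 * (z + w) + (-(z + 1))) := by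
      congr 1; ext w; ring
    have h2' : ∫ w in (2:ℝ)..3, Real.log (z + w) * (3 - w) = ∫ w in (2:ℝ)..3, Real.log (z + w) * (-1 * (z + w) + (z + 3)) := by
      congr 1; ext w; ring
    rw [h1', h1, h2', h2]
    unfold Th G0
    simp only [Real.logb]
    field_simp
    ring
  · apply ContinuousOn.log (by fun_prop)
    intro w hw
    have := hw.1; linarith
  · exact (hti.const_mul _).integrableOn
  · apply Integrable.const_mul
    have : Continuous (fun w => Real.log (max (z + w) z) * tent w) := by
      apply Continuous.mul _ tent_cont
      apply Continuous.log (by fun_prop)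
      intro w
      exact (lt_of_lt_of_le hz (le_max_right _ _)).ne'
    have h5 : Integrable (fun w => Real.log (max (z + w) z) * tent w) :=
      this.integrable_of_hasCompactSupport hct.mul_left
    refine h5.integrableOn.congr_fun (s := Set.Ioi 0) ?_ measurableSet_Ioi
    intro w hw
    have hw : 0 < w := hw
    simp only
    rw [max_eq_left (by linarith)]

/-- even bump -/
noncomputable def Bp (s α : ℝ) : ℝ := |α| / s * tent (α ^ 2 / s)

theorem Bp_cont (s : ℝ) : Continuous (Bp s) := by
  unfold Bp
  exact (continuous_abs.div_const s).mul (tent_cont.comp (by fun_prop))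
theorem Bp_even (s α : ℝ) : Bp s (-α) = Bp s α := by simp [Bp]
theorem Bp_nonneg {s : ℝ} (hs : 1 ≤ s) (α : ℝ) : 0 ≤ Bp s α :=
  mul_nonneg (by positivity) (tent_nonneg _)
theorem Bp_zero {s : ℝ} (hs : 1 ≤ s) {α : ℝ} (h : |α| ≤ 1) : Bp s α = 0 := by
  unfold Bp
  rw [tent_left, mul_zero]
  rw [div_le_one (by linarith), ← sq_abs]
  nlinarith [abs_nonneg α]
theorem Bp_far {s : ℝ} (hs : 1 ≤ s) {α : ℝ} (h : 3 * s ≤ α ^ 2) : Bp s α = 0 := by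
  unfold Bp
  rw [tent_right, mul_zero]
  rw [le_div_iff₀ (by linarith)]; linarith
theorem Bp_le {s : ℝ} (hs : 1 ≤ s) (α : ℝ) : Bp s α ≤ 3 := by
  by_cases h : 3 * s ≤ α ^ 2
  · rw [Bp_far hs h]; norm_num
  · push Not at h
    unfold Bp
    have h1 : |α| ≤ 3 * s := by
      by_contra h2
      push Not at h2
      rw [← sq_abs] at h
      nlinarith
    have h2 : |α| / s ≤ 3 := by rw [div_le_iff₀ (by linarith)]; exact h1
    calc |α| / s * tent (α ^ 2 / s) ≤ 3 * 1 := by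
          apply mul_le_mul h2 (tent_le _) (tent_nonneg _) (by norm_num)
      _ = 3 := by norm_num
theorem Bp_supp {s : ℝ} (hs : 1 ≤ s) : HasCompactSupport (Bp s) := by
  apply HasCompactSupport.of_support_subset_isCompact (isCompact_Icc (a := -(3 * s)) (b := 3 * s))
  intro α hα
  rw [Function.mem_support] at hα
  rw [Set.mem_Icc, ← abs_le]
  by_contra h
  push Not at h
  apply hα
  apply Bp_far hs
  rw [← sq_abs]
  nlinarith

theorem Bp_int {s : ℝ} (hs : 1 ≤ s) (g : ℝ → ℝ) :
    ∫ α, g (α ^ 2) * Bp s α = ∫ w in Set.Ioi (0 : ℝ), g (s * w) * tent w := by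
  have hs0 : 0 < s := by linarith
  have e1 : ∫ α, g (α ^ 2) * Bp s α = ∫ α : ℝ, (fun t => g (t ^ 2) * Bp s t) |α| := by
    congr 1; ext α; simp [Bp]
  rw [e1, integral_comp_abs (f := fun t => g (t ^ 2) * Bp s t)]
  have e2 := integral_comp_rpow_Ioi_of_pos (g := fun v => g v * tent (v / s) * (1 / s)) (p := 2) (by norm_num)
  have e3 := integral_comp_mul_left_Ioi (fun v => g v * tent (v / s) * (1 / s)) 0 hs0
  have e4 : 2 * ∫ t in Set.Ioi (0:ℝ), g (t ^ 2) * Bp s t = ∫ y in Set.Ioi (0:ℝ), g y * tent (y / s) * (1 / s) := by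
    rw [← e2, ← integral_const_mul]
    apply setIntegral_congr_fun measurableSet_Ioi
    intro t ht
    have ht : 0 < t := ht
    have : (2:ℝ) - 1 = 1 := by norm_num
    simp only [this, Real.rpow_one, Real.rpow_two, Bp, smul_eq_mul, abs_of_pos ht]
    ring
  rw [e4]
  rw [mul_zero, smul_eq_mul] at e3
  have e5 : ∫ y in Set.Ioi (0:ℝ), g y * tent (y / s) * (1 / s) = s * ∫ x in Set.Ioi (0:ℝ), g (s * x) * tent (s * x / s) * (1 / s) := by
    rw [e3]; field_simp
  rw [e5, ← integral_const_mul]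
  congr 1; ext x
  have : s * x / s = x := by field_simp
  rw [this]; field_simp

/-- expected rate of the bump -/
noncomputable def Er (Y : ℝ) : ℝ := Real.logb 2 Y + Th (1 / Y) - 3 / (2 * Real.log 2)

theorem Bp_mass {s : ℝ} (hs : 1 ≤ s) : ∫ α, Bp s α = 1 := by
  have := Bp_int hs (fun _ => 1)
  simpa [tent_mass] using this

theorem Bp_log {σ Λ P : ℝ} (hσ : 0 < σ) (hΛ : 0 < Λ) (hP : 0 < P) (hs : 1 ≤ σ * Λ) :
    ∫ α, Real.logb 2 (1 + P * α ^ 2 / σ) * Bp (σ * Λ) α = Er (P * Λ) := by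
  have := Bp_int hs (fun v => Real.logb 2 (1 + P * v / σ))
  rw [this, Er, ← tent_log _ (by positivity)]
  congr 1; ext w
  congr 3
  field_simp

theorem int_tsum {F : ℕ → ℝ → ℝ} (hc : Continuous (fun a => ∑' i, F i a))
    (hF_int : ∀ i, Integrable (F i)) (hF_sum : Summable fun i ↦ ∫ a, ‖F i a‖) :
    Integrable (fun a => ∑' i, F i a) := by
  refine ⟨hc.aestronglyMeasurable, ?_⟩
  unfold HasFiniteIntegral
  have h1 : ∫⁻ a, ‖∑' i, F i a‖ₑ ≤ ∫⁻ a, ∑' i, ‖F i a‖ₑ :=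
    lintegral_mono fun a => enorm_tsum_le_tsum_enorm
  refine lt_of_le_of_lt h1 ?_
  rw [lintegral_tsum (fun i => (hF_int i).1.enorm)]
  have (i : ℕ) : ∫⁻ a, ‖F i a‖ₑ = ENNReal.ofReal (∫ a, ‖F i a‖) := by
    rw [ofReal_integral_norm_eq_lintegral_enorm (hF_int i)]
  rw [funext this]
  exact hF_sum.tsum_ofReal_lt_top

noncomputable def mixf (σ : ℝ) (Λ p : ℕ → ℝ) (α : ℝ) : ℝ := ∑' k, p k * Bp (σ * Λ k) α


theorem mixf_cont {σ : ℝ} {Λ p : ℕ → ℝ}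
    (hs : ∀ k, 1 ≤ σ * Λ k) (hp : ∀ k, 0 ≤ p k) (hp1 : HasSum p 1)
    : Continuous (mixf σ Λ p) := by
  refine continuous_tsum (u := fun k => p k * 3) (fun k => (Bp_cont _).const_mul _)
    (hp1.summable.mul_right 3) ?_
  intro k α
  rw [Real.norm_of_nonneg (mul_nonneg (hp k) (Bp_nonneg (hs k) α))]
  exact mul_le_mul_of_nonneg_left (Bp_le (hs k) α) (hp k)

theorem mixf_even {σ : ℝ} {Λ p : ℕ → ℝ} (α : ℝ) : mixf σ Λ p (-α) = mixf σ Λ p α := by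
  simp [mixf, Bp_even]

theorem mixf_nonneg {σ : ℝ} {Λ p : ℕ → ℝ}
    (hs : ∀ k, 1 ≤ σ * Λ k) (hp : ∀ k, 0 ≤ p k)
    (α : ℝ) : 0 ≤ mixf σ Λ p α :=
  tsum_nonneg fun k => mul_nonneg (hp k) (Bp_nonneg (hs k) α)

theorem mixf_zero {σ : ℝ} {Λ p : ℕ → ℝ}
    (hs : ∀ k, 1 ≤ σ * Λ k)
    (α : ℝ) (h : |α| ≤ 1) : mixf σ Λ p α = 0 := by
  simp [mixf, Bp_zero (hs _) h]

theorem mixf_main {σ : ℝ} {Λ p : ℕ → ℝ}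
    (hs : ∀ k, 1 ≤ σ * Λ k) (hp : ∀ k, 0 ≤ p k) (hp1 : HasSum p 1)
    (g : ℝ → ℝ) (hg : Continuous g) (hg0 : ∀ α, 0 ≤ g α)
    (hsum : Summable fun k => p k * ∫ α, g α * Bp (σ * Λ k) α) :
    Integrable (fun α => g α * mixf σ Λ p α) ∧
    HasSum (fun k => p k * ∫ α, g α * Bp (σ * Λ k) α) (∫ α, g α * mixf σ Λ p α) := by
  have e : (fun α => g α * mixf σ Λ p α) = fun α => ∑' k, p k * (g α * Bp (σ * Λ k) α) := by
    ext α
    rw [mixf, ← tsum_mul_left]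
    congr 1; ext k; ring
  have hi : ∀ k, Integrable (fun α => p k * (g α * Bp (σ * Λ k) α)) := by
    intro k
    apply Integrable.const_mul
    exact (hg.mul (Bp_cont _)).integrable_of_hasCompactSupport (Bp_supp (hs k)).mul_left
  have hn : (fun k => ∫ α, ‖p k * (g α * Bp (σ * Λ k) α)‖) = fun k => p k * ∫ α, g α * Bp (σ * Λ k) α := by
    ext k
    rw [← integral_const_mul]
    congr 1; ext α
    exact Real.norm_of_nonneg (mul_nonneg (hp k) (mul_nonneg (hg0 α) (Bp_nonneg (hs k) α)))
  have hcont : Continuous (fun α => g α * mixf σ Λ p α) := hg.mul (mixf_cont hs hp hp1)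
  constructor
  · rw [e] at hcont ⊢
    exact int_tsum hcont hi (by rw [hn]; exact hsum)
  · rw [e]
    have := hasSum_integral_of_summable_integral_norm hi (by rw [hn]; exact hsum)
    simpa only [integral_const_mul] using this

theorem mixf_mass {σ : ℝ} {Λ p : ℕ → ℝ}
    (hs : ∀ k, 1 ≤ σ * Λ k) (hp : ∀ k, 0 ≤ p k) (hp1 : HasSum p 1)
    : Integrable (mixf σ Λ p) ∧ ∫ α, mixf σ Λ p α = 1 := by
  have h := mixf_main hs hp hp1 (fun _ => 1) continuous_const (fun _ => zero_le_one)
  simp only [one_mul, Bp_mass (hs _), mul_one] at h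
  exact ⟨(h hp1.summable).1, (h hp1.summable).2.unique hp1⟩

theorem mixf_log {σ : ℝ} {Λ p : ℕ → ℝ}
    (hσ : 0 < σ) (hΛ : ∀ k, 0 < Λ k) (hs : ∀ k, 1 ≤ σ * Λ k) (hp : ∀ k, 0 ≤ p k) (hp1 : HasSum p 1)
    {P : ℝ} (hP : 0 < P) (hsum : Summable fun k => p k * Er (P * Λ k)) :
    Integrable (fun α => Real.logb 2 (1 + P * α ^ 2 / σ) * mixf σ Λ p α) ∧
    HasSum (fun k => p k * Er (P * Λ k)) (∫ α, Real.logb 2 (1 + P * α ^ 2 / σ) * mixf σ Λ p α) := by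
  have hpos : ∀ α : ℝ, 1 ≤ 1 + P * α ^ 2 / σ := fun α => by
    have : 0 ≤ P * α ^ 2 / σ := by positivity
    linarith
  have h := mixf_main hs hp hp1 (fun α => Real.logb 2 (1 + P * α ^ 2 / σ)) ?_ ?_
  · simp only [Bp_log hσ (hΛ _) hP (hs _)] at h
    exact h hsum
  · unfold Real.logb
    apply Continuous.div_const
    apply Continuous.log (by fun_prop)
    intro α; have := hpos α; linarith
  · intro α
    exact Real.logb_nonneg (by norm_num) (hpos α)


theorem cq_half : Computable (fun n : ℕ => (1 / ((2 ^ n : ℕ) : ℚ))) :=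
  cq_inv_nat (c_pow (Computable.const 2) Computable.id) (fun t => by positivity)

theorem half_pow_zpow (n : ℕ) : (2 : ℝ) ^ (-(n : ℤ)) = (1 / 2) ^ n := by
  rw [zpow_neg, zpow_natCast, one_div, inv_pow]

theorem left_add {a u : ℝ} (ha : LeftComputable a) (hu : IsComputableReal u) :
    LeftComputable (a + u) := by
  obtain ⟨r, hr, hm, ht⟩ := ha
  obtain ⟨q, hq, he⟩ := hu
  simp only [half_pow_zpow] at he
  refine ⟨fun n => r n + (q n - ((3 : ℕ) : ℚ) * (1 / ((2 ^ n : ℕ) : ℚ))), ?_, ?_, ?_⟩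
  · exact cq_add hr (cq_sub hq (cq_mul (cq_natCast (Computable.const 3)) cq_half))
  · intro n
    have h1 := abs_le.1 (he n)
    have h2 := abs_le.1 (he (n + 1))
    have h3 : (r n : ℝ) ≤ r (n + 1) := by exact_mod_cast hm n
    have h4 : (0 : ℝ) < (1 / 2) ^ n := by positivity
    rw [← Rat.cast_le (K := ℝ)]
    push_cast
    rw [pow_succ] at h2
    have e1 : (1 : ℝ) / 2 ^ n = (1 / 2) ^ n := by rw [one_div_pow]
    have e2 : (1 : ℝ) / 2 ^ (n + 1) = (1 / 2) ^ n * (1 / 2) := by rw [← pow_succ, one_div_pow]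
    rw [e1, e2]
    linarith [h1.1, h1.2, h2.1, h2.2]
  · have h4 : Tendsto (fun n : ℕ => (1 / 2 : ℝ) ^ n) atTop (nhds 0) :=
      tendsto_pow_atTop_nhds_zero_of_lt_one (by norm_num) (by norm_num)
    have h5 : Tendsto (fun n => (q n : ℝ)) atTop (nhds u) := by
      rw [tendsto_iff_norm_sub_tendsto_zero]
      refine squeeze_zero (fun _ => norm_nonneg _) ?_ h4
      intro n
      rw [Real.norm_eq_abs, abs_sub_comm]
      exact he n
    have h6 := ht.add (h5.sub (h4.const_mul 3))
    simp only [mul_zero, sub_zero] at h6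
    refine h6.congr ?_
    intro n
    push_cast
    rw [one_div_pow]

theorem comp_neg {u : ℝ} (hu : IsComputableReal u) : IsComputableReal (-u) := by
  obtain ⟨q, hq, he⟩ := hu
  refine ⟨fun n => - q n, cq_neg hq, ?_⟩
  intro n
  have := he n
  push_cast
  rw [← abs_neg]
  convert this using 2
  ring

theorem right_iff {x : ℝ} : RightComputable x ↔ LeftComputable (-x) := by
  constructor
  · rintro ⟨q, hq, hm, ht⟩
    refine ⟨fun n => - q n, cq_neg hq, fun n => neg_le_neg (hm n), ?_⟩
    simpa using ht.neg
  · rintro ⟨q, hq, hm, ht⟩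
    refine ⟨fun n => - q n, cq_neg hq, fun n => neg_le_neg (hm n), ?_⟩
    simpa using ht.neg

theorem comp_of_bound {u C : ℝ} {q : ℕ → ℚ} (hq : Computable q)
    (h : ∀ n, |u - q n| ≤ C * (1 / 2) ^ n) : IsComputableReal u := by
  obtain ⟨j, hj⟩ := pow_unbounded_of_one_lt C (one_lt_two)
  refine ⟨fun n => q (n + j), hq.comp (c_add Computable.id (Computable.const j)), ?_⟩
  intro n
  rw [half_pow_zpow]
  refine (h (n + j)).trans ?_
  rw [pow_add]
  have h1 : C * (1 / 2) ^ j ≤ 1 := by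
    rw [one_div_pow, mul_one_div, div_le_one (by positivity)]; exact hj.le
  have h2 : (0 : ℝ) < (1 / 2) ^ n := by positivity
  nlinarith

/-- approximate binary logarithm -/
def Lgq (n : ℕ) (y : ℚ) : ℚ :=
  ((Nat.log 2 (y.num.toNat ^ (2 ^ n) / y.den ^ (2 ^ n)) : ℕ) : ℚ) * (1 / ((2 ^ n : ℕ) : ℚ))

theorem Lgq_comp {α : Type*} [Primcodable α] {f : α → ℕ} {g : α → ℚ} (hf : Computable f)
    (hg : Computable g) : Computable (fun a => Lgq (f a) (g a)) := by
  unfold Lgq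
  have h2 : Computable (fun a => 2 ^ (f a)) := c_pow (Computable.const 2) hf
  refine cq_mul (cq_natCast (cr_log.to_comp.comp (c_div (c_pow (cq_pos hg) h2) (c_pow (cq_den hg) h2))))
    (cq_half.comp hf)

theorem Lgq_err (n : ℕ) (y : ℚ) (hy : 1 ≤ y) :
    |(Lgq n y : ℝ) - Real.logb 2 y| ≤ (1 / 2) ^ n := by
  set N := 2 ^ n with hN
  have hNpos : (0 : ℝ) < (N : ℝ) := by rw [hN]; positivity
  set M := y.num.toNat ^ N / y.den ^ N with hM
  set L := Nat.log 2 M with hL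
  have hden : 0 < y.den ^ N := by have := y.den_pos; positivity
  have hnum : (0 : ℤ) < y.num := Rat.num_pos.2 (by linarith)
  have hnd : y.den ≤ y.num.toNat := by
    have h1 : (y.den : ℚ) ≤ y.num := by
      have := Rat.num_div_den y
      rw [← this, le_div_iff₀ (by exact_mod_cast y.den_pos)] at hy
      linarith
    have : (y.den : ℤ) ≤ y.num := by exact_mod_cast h1
    omega
  have hM1 : 1 ≤ M := by
    rw [hM, Nat.le_div_iff_mul_le hden, one_mul]
    exact Nat.pow_le_pow_left hnd N
  have hyR : (y : ℝ) = (y.num.toNat : ℝ) / (y.den : ℝ) := by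
    have h2 : ((y.num.toNat : ℤ)) = y.num := Int.toNat_of_nonneg hnum.le
    have h3 : (y.num.toNat : ℝ) = (y.num : ℝ) := by exact_mod_cast congrArg (Int.cast : ℤ → ℝ) h2
    rw [h3]; exact Rat.cast_def y
  have hypow : (y : ℝ) ^ N = ((y.num.toNat ^ N : ℕ) : ℝ) / ((y.den ^ N : ℕ) : ℝ) := by
    rw [hyR, div_pow]; push_cast; rfl
  have hdR : (0 : ℝ) < ((y.den ^ N : ℕ) : ℝ) := by exact_mod_cast hden
  have lo : (2 : ℝ) ^ L ≤ (y : ℝ) ^ N := by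
    rw [hypow, le_div_iff₀ hdR]
    have h1 : 2 ^ L ≤ M := Nat.pow_log_le_self 2 (by omega)
    have h2 : M * y.den ^ N ≤ y.num.toNat ^ N := Nat.div_mul_le_self _ _
    have h3 : 2 ^ L * y.den ^ N ≤ y.num.toNat ^ N := (Nat.mul_le_mul_right _ h1).trans h2
    exact_mod_cast h3
  have hi : (y : ℝ) ^ N ≤ (2 : ℝ) ^ (L + 1) := by
    rw [hypow, div_le_iff₀ hdR]
    have h1 : M + 1 ≤ 2 ^ (L + 1) := Nat.lt_pow_succ_log_self (by norm_num) M
    have h2 : y.num.toNat ^ N ≤ (M + 1) * y.den ^ N := by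
      have h4 := Nat.div_add_mod (y.num.toNat ^ N) (y.den ^ N)
      have h5 := Nat.mod_lt (y.num.toNat ^ N) hden
      rw [← hM] at h4
      nlinarith
    have h3 : y.num.toNat ^ N ≤ 2 ^ (L + 1) * y.den ^ N := h2.trans (Nat.mul_le_mul_right _ h1)
    exact_mod_cast h3
  have hy0 : (0 : ℝ) < y := by
    have : (0 : ℚ) < y := by linarith
    exact_mod_cast this
  have lo' : (L : ℝ) ≤ N * Real.logb 2 y := by
    have := Real.logb_le_logb_of_le (b := 2) (by norm_num) (by positivity) lo
    rwa [Real.logb_pow, Real.logb_pow, Real.logb_self_eq_one (by norm_num), mul_one] at this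
  have hi' : N * Real.logb 2 y ≤ (L : ℝ) + 1 := by
    have := Real.logb_le_logb_of_le (b := 2) (by norm_num) (by positivity) hi
    rw [Real.logb_pow, Real.logb_pow, Real.logb_self_eq_one (by norm_num), mul_one] at this
    exact_mod_cast this
  have e : (Lgq n y : ℝ) = L / N := by
    unfold Lgq
    push_cast
    rw [mul_one_div, hN]
    push_cast
    rfl
  have e2 : (1 / 2 : ℝ) ^ n = 1 / N := by rw [hN]; push_cast; rw [one_div_pow]
  rw [e, e2]
  have e3 : Real.logb 2 y = (N * Real.logb 2 y) / N := by field_simp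
  rw [e3, ← sub_div, abs_div, abs_of_pos hNpos]
  gcongr
  rw [abs_le]; constructor <;> linarith

theorem logb_lip {y y' : ℝ} (hy : 1 ≤ y) (hy' : 1 ≤ y') :
    |Real.logb 2 y - Real.logb 2 y'| ≤ 2 * |y - y'| := by
  wlog h : y' ≤ y generalizing y y'
  · rw [abs_sub_comm, abs_sub_comm y]
    exact this hy' hy (by linarith)
  have hl : 1 / 2 < Real.log 2 := by have := Real.log_two_gt_d9; linarith
  have h1 : Real.log y - Real.log y' ≤ y - y' := by
    rw [← Real.log_div (by linarith) (by linarith)]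
    have h2 := Real.log_le_sub_one_of_pos (show 0 < y / y' by positivity)
    have h3 : y / y' - 1 ≤ y - y' := by
      rw [div_sub_one (by linarith), div_le_iff₀ (by linarith)]
      nlinarith
    linarith
  have h0 : 0 ≤ Real.log y - Real.log y' := by
    have := Real.log_le_log (by linarith) h
    linarith
  rw [Real.logb, Real.logb, ← sub_div, abs_of_nonneg (by positivity), abs_of_nonneg (by linarith),
    div_le_iff₀ (by linarith)]
  nlinarith

/-- approximation of `G0` -/
def Gq (n : ℕ) (y : ℚ) : ℚ := y * y * Lgq n y

theorem Gq_err {K : ℝ} {n : ℕ} {y : ℚ} {y' : ℝ} (hy : 1 ≤ y) (hy' : 1 ≤ y') (hK : (y : ℝ) ≤ K)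
    (hK' : y' ≤ K) :
    |(Gq n y : ℝ) - G0 y'| ≤ 6 * K ^ 2 * ((1 / 2) ^ n + |(y : ℝ) - y'|) := by
  have h1 := Lgq_err n y hy
  have hyR : (1 : ℝ) ≤ y := by exact_mod_cast hy
  have h2 := logb_lip hyR hy'
  have h3 : |Real.logb 2 y'| ≤ 2 * K := by
    have := logb_lip hy' le_rfl
    rw [Real.logb_one, sub_zero, abs_of_nonneg (by linarith : 0 ≤ y' - 1)] at this
    linarith
  have h4 : |(Lgq n y : ℝ) - Real.logb 2 y'| ≤ (1 / 2) ^ n + 2 * |(y : ℝ) - y'| := by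
    have := abs_sub_le (Lgq n y : ℝ) (Real.logb 2 y) (Real.logb 2 y')
    linarith
  have e : (Gq n y : ℝ) - G0 y' = (y : ℝ) ^ 2 * ((Lgq n y : ℝ) - Real.logb 2 y')
      + ((y : ℝ) - y') * (y + y') * Real.logb 2 y' := by
    unfold Gq G0; push_cast; ring
  rw [e]
  refine (abs_add_le _ _).trans ?_
  rw [abs_mul, abs_mul, abs_mul, abs_of_nonneg (by positivity : (0 : ℝ) ≤ (y : ℝ) ^ 2),
    abs_of_nonneg (by linarith : (0 : ℝ) ≤ y + y')]
  have hp : (0 : ℝ) ≤ (1 / 2) ^ n := by positivity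
  have a1 : (y : ℝ) ^ 2 * |(Lgq n y : ℝ) - Real.logb 2 y'| ≤ K ^ 2 * ((1 / 2) ^ n + 2 * |(y : ℝ) - y'|) := by
    gcongr
  have a2 : |(y : ℝ) - y'| * (y + y') * |Real.logb 2 y'| ≤ |(y : ℝ) - y'| * (K + K) * (2 * K) := by
    have : 0 ≤ K := by linarith
    gcongr
  have a3 : 0 ≤ K ^ 2 * (1 / 2) ^ n := by positivity
  nlinarith

/-- approximation of `Th` -/
def Thq (n : ℕ) (z : ℚ) : ℚ :=
  (Gq n (z + (1 : ℕ)) - (2 : ℕ) * Gq n (z + (2 : ℕ)) + Gq n (z + (3 : ℕ))) * (1 / (2 : ℕ))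

theorem Thq_comp {α : Type*} [Primcodable α] {f : α → ℕ} {g : α → ℚ} (hf : Computable f)
    (hg : Computable g) : Computable (fun a => Thq (f a) (g a)) := by
  have hG : ∀ c : ℕ, Computable (fun a => Gq (f a) (g a + (c : ℚ))) := by
    intro c
    have h1 : Computable (fun a => g a + (c : ℚ)) := cq_add hg (cq_natCast (Computable.const c))
    exact cq_mul (cq_mul h1 h1) (Lgq_comp hf h1)
  exact cq_mul (cq_add (cq_sub (hG 1) (cq_mul (cq_natCast (Computable.const 2)) (hG 2))) (hG 3))
    (cq_inv_nat (Computable.const 2) (fun _ => by norm_num))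

theorem Thq_err {Z : ℝ} {n : ℕ} {z : ℚ} {z' : ℝ} (hz : 0 ≤ z) (hz' : 0 ≤ z') (hK : (z : ℝ) ≤ Z)
    (hK' : z' ≤ Z) :
    |(Thq n z : ℝ) - Th z'| ≤ 12 * (Z + 3) ^ 2 * ((1 / 2) ^ n + |(z : ℝ) - z'|) := by
  have hg : ∀ c : ℕ, 1 ≤ c → c ≤ 3 → |(Gq n (z + (c : ℚ)) : ℝ) - G0 (z' + c)| ≤
      6 * (Z + 3) ^ 2 * ((1 / 2) ^ n + |(z : ℝ) - z'|) := by
    intro c hc hc3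
    have h1 : (1 : ℝ) ≤ c := by exact_mod_cast hc
    have h1q : (1 : ℚ) ≤ c := by exact_mod_cast hc
    have h3 : (c : ℝ) ≤ 3 := by exact_mod_cast hc3
    have := Gq_err (K := Z + 3) (n := n) (y := z + c) (y' := z' + c) (by linarith) (by linarith)
      (by push_cast; linarith) (by linarith)
    push_cast at this
    rwa [add_sub_add_right_eq_sub] at this
  have g1 := abs_le.1 (hg 1 (by norm_num) (by norm_num))
  have g2 := abs_le.1 (hg 2 (by norm_num) (by norm_num))
  have g3 := abs_le.1 (hg 3 (by norm_num) (by norm_num))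
  simp only [Thq, Th]
  push_cast at g1 g2 g3 ⊢
  rw [abs_le]
  constructor <;> linarith [g1.1, g1.2, g2.1, g2.2, g3.1, g3.2]

theorem sum_comp {a : ℕ → ℚ} {b : ℕ → ℝ} {A : ℕ → ℕ → ℚ} {D M C : ℝ}
    (ha : Computable a) (hA : Computable₂ A)
    (hD : ∀ k, |(a k : ℝ)| ≤ D * (1 / 2) ^ k) (hM : ∀ k, |b k| ≤ M)
    (hC : ∀ k n, |(A k n : ℝ) - b k| ≤ C * (1 / 2) ^ n) (κ : ℚ) {S : ℝ}
    (hS : HasSum (fun k => (a k : ℝ) * b k) S) :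
    IsComputableReal (κ + S) := by
  have hq : Computable (fun n : ℕ => κ + ∑ k ∈ Finset.range n, a k * A k n) := by
    refine cq_add (Computable.const κ) (cq_sum Computable.id ?_)
    exact cq_mul (ha.comp Computable.snd) (hA.comp Computable.snd Computable.fst)
  have hM0 : 0 ≤ M := (abs_nonneg _).trans (hM 0)
  have hD0 : 0 ≤ D := by have := (abs_nonneg _).trans (hD 0); simpa using this
  have hC0 : 0 ≤ C := by have := (abs_nonneg _).trans (hC 0 0); simpa using this
  refine comp_of_bound hq (C := 2 * D * M + 2 * D * C) ?_
  intro n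
  have h1 : |S - ∑ k ∈ Finset.range n, (a k : ℝ) * b k| ≤ 2 * D * M * (1 / 2) ^ n := by
    have h2 := (hasSum_nat_add_iff' n).2 hS
    have h3 : HasSum (fun k : ℕ => (D * M * (1 / 2) ^ n) * (1 / 2 : ℝ) ^ k) ((D * M * (1 / 2) ^ n) * 2) :=
      hasSum_geometric_two.mul_left _
    have h4 : ∀ k, ‖(a (k + n) : ℝ) * b (k + n)‖ ≤ (D * M * (1 / 2) ^ n) * (1 / 2 : ℝ) ^ k := by
      intro k
      rw [Real.norm_eq_abs, abs_mul]
      calc _ ≤ (D * (1 / 2) ^ (k + n)) * M := by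
            have := hD (k + n)
            have := hM (k + n)
            gcongr
        _ = _ := by rw [pow_add]; ring
    have h5 := tsum_of_norm_bounded h3 h4
    rw [h2.tsum_eq, Real.norm_eq_abs] at h5
    linarith
  have h2 : |∑ k ∈ Finset.range n, (a k : ℝ) * b k - ∑ k ∈ Finset.range n, (a k : ℝ) * A k n|
      ≤ 2 * D * C * (1 / 2) ^ n := by
    rw [← Finset.sum_sub_distrib]
    refine (Finset.abs_sum_le_sum_abs _ _).trans ?_
    have : ∀ k ∈ Finset.range n, |(a k : ℝ) * b k - (a k : ℝ) * A k n| ≤ (D * C * (1 / 2) ^ n) * (1 / 2 : ℝ) ^ k := by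
      intro k _
      rw [← mul_sub, abs_mul, abs_sub_comm]
      calc _ ≤ (D * (1 / 2) ^ k) * (C * (1 / 2) ^ n) := by
            have := hD k
            have := hC k n
            gcongr
        _ = _ := by ring
    refine (Finset.sum_le_sum this).trans ?_
    rw [← Finset.mul_sum]
    have hle : ∑ k ∈ Finset.range n, (1 / 2 : ℝ) ^ k ≤ 2 :=
      (hasSum_geometric_two.summable.sum_le_tsum _ (fun k _ => by positivity)).trans_eq hasSum_geometric_two.tsum_eq
    have h0 : 0 ≤ D * C * (1 / 2 : ℝ) ^ n := by positivity
    nlinarith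
  push_cast
  have := abs_sub_le S (∑ k ∈ Finset.range n, (a k : ℝ) * b k) (∑ k ∈ Finset.range n, (a k : ℝ) * A k n)
  rw [add_sub_add_left_eq_sub]
  linarith

theorem inv_comp {P : ℝ} (hP : 0 < P) (hc : IsComputableReal P) :
    ∃ (z : ℕ → ℚ) (Z C : ℝ), Computable z ∧ 1 / P ≤ Z ∧
      ∀ n, 0 ≤ z n ∧ (z n : ℝ) ≤ Z ∧ |(z n : ℝ) - 1 / P| ≤ C * (1 / 2) ^ n := by
  obtain ⟨q, hq, he⟩ := hc
  simp only [half_pow_zpow] at he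
  obtain ⟨j, hj⟩ := exists_pow_lt_of_lt_one (half_pos hP) (by norm_num : (1 / 2 : ℝ) < 1)
  have hb : ∀ n, P / 2 ≤ q (n + j) := by
    intro n
    have h1 := abs_le.1 (he (n + j))
    have h2 : (1 / 2 : ℝ) ^ (n + j) ≤ (1 / 2) ^ j :=
      pow_le_pow_of_le_one (by norm_num) (by norm_num) (by omega)
    linarith [h1.2]
  have hbp : ∀ n, 0 < q (n + j) := by
    intro n
    have : (0 : ℝ) < q (n + j) := lt_of_lt_of_le (by positivity) (hb n)
    exact_mod_cast this
  refine ⟨fun n => 1 / q (n + j), 2 / P, 2 / P ^ 2, ?_, ?_, ?_⟩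
  · exact cq_inv (hq.comp (c_add Computable.id (Computable.const j))) hbp
  · gcongr; norm_num
  · intro n
    have h0 : (0 : ℝ) < q (n + j) := by exact_mod_cast hbp n
    refine ⟨(one_div_pos.2 (hbp n)).le, ?_, ?_⟩
    · push_cast
      rw [div_le_div_iff₀ h0 hP]
      linarith [hb n]
    · push_cast
      have e : 1 / (q (n + j) : ℝ) - 1 / P = (P - q (n + j)) / (q (n + j) * P) := by field_simp
      rw [e, abs_div, abs_of_pos (by positivity : (0 : ℝ) < q (n + j) * P), div_le_iff₀ (by positivity)]
      have h2 : (1 / 2 : ℝ) ^ (n + j) ≤ (1 / 2) ^ n :=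
        pow_le_pow_of_le_one (by norm_num) (by norm_num) (by omega)
      refine ((he (n + j)).trans h2).trans ?_
      have h3 : 1 ≤ 2 / P ^ 2 * (q (n + j) * P) := by
        have := hb n
        rw [div_mul_eq_mul_div, le_div_iff₀ (by positivity)]
        nlinarith
      have h4 : (0 : ℝ) < (1 / 2) ^ n := by positivity
      nlinarith


def Lam (ρ m : ℕ) : ℕ → ℝ
  | 0 => ρ
  | k + 1 => ρ * 4 ^ (2 ^ (k + m))

noncomputable def pw (c : ℕ → ℝ) : ℕ → ℝ
  | 0 => 1 - ∑' k, c k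
  | k + 1 => c k

noncomputable def bb (P : ℝ) (ρ m k : ℕ) : ℝ :=
  Th (1 / P * (1 / ((ρ * 4 ^ (2 ^ (k + m)) : ℕ) : ℝ))) - Th (1 / P * (1 / (ρ : ℝ)))

theorem Lam_pos {ρ : ℕ} (hρ : 1 ≤ ρ) (m k : ℕ) : 0 < Lam ρ m k := by
  have : (0 : ℝ) < ρ := by exact_mod_cast hρ
  cases k with
  | zero => exact this
  | succ k => simp only [Lam]; positivity

theorem Lam_ge (ρ m k : ℕ) : (ρ : ℝ) ≤ Lam ρ m k := by
  cases k with
  | zero => exact le_rfl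
  | succ k =>
    simp only [Lam]
    exact le_mul_of_one_le_right (Nat.cast_nonneg _) (one_le_pow₀ (by norm_num))

theorem Er_diff {P : ℝ} (hP : 0 < P) {ρ : ℕ} (hρ : 1 ≤ ρ) (m k : ℕ) :
    Er (P * Lam ρ m (k + 1)) = Er (P * Lam ρ m 0) + (2 ^ (k + m + 1) + bb P ρ m k) := by
  have hρ' : (0 : ℝ) < ρ := by exact_mod_cast hρ
  have h4 : Real.logb 2 ((4 : ℝ) ^ (2 ^ (k + m))) = 2 ^ (k + m + 1) := by
    have : ((4 : ℝ) ^ (2 ^ (k + m))) = 2 ^ (2 ^ (k + m + 1)) := by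
      rw [show (4 : ℝ) = 2 ^ 2 by norm_num, ← pow_mul]; congr 1; ring
    rw [this, Real.logb_pow, Real.logb_self_eq_one (by norm_num)]
    push_cast; ring
  unfold Er bb
  simp only [Lam]
  rw [← mul_assoc, Real.logb_mul (x := P * ρ) (by positivity) (by positivity), h4]
  have e1 : 1 / (P * ρ * 4 ^ 2 ^ (k + m)) = 1 / P * (1 / ((ρ * 4 ^ (2 ^ (k + m)) : ℕ) : ℝ)) := by
    push_cast; rw [one_div_mul_one_div, mul_assoc]
  have e2 : 1 / (P * ρ) = 1 / P * (1 / (ρ : ℝ)) := by rw [one_div_mul_one_div]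
  rw [e1, e2]; ring

theorem hasSum_cast {f g : ℕ → ℝ} {a b : ℝ} (h : HasSum f a) (hf : ∀ k, g k = f k)
    (hab : b = a) : HasSum g b := by
  rw [funext hf, hab]; exact h

theorem hasSum_half : HasSum (fun k : ℕ => (1 / 2 : ℝ) ^ (k + 1)) 1 := by
  have := hasSum_geometric_two.mul_left (1 / 2 : ℝ)
  simp only [← pow_succ'] at this
  exact hasSum_cast this (fun _ => rfl) (by norm_num)

theorem pw_props {c : ℕ → ℝ} (h0 : ∀ k, 0 ≤ c k) (h1 : ∀ k, c k ≤ (1 / 2) ^ (k + 1)) :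
    (∀ k, 0 ≤ pw c k) ∧ HasSum (pw c) 1 := by
  have hs : Summable c := Summable.of_nonneg_of_le h0 h1 hasSum_half.summable
  have hle : ∑' k, c k ≤ 1 := hasSum_le h1 hs.hasSum hasSum_half
  constructor
  · intro k
    cases k with
    | zero => simp only [pw]; linarith
    | succ k => exact h0 k
  · rw [← hasSum_nat_add_iff' 1]
    simpa [pw] using hs.hasSum

theorem bb_bound {P : ℝ} (hP : 0 < P) {ρ : ℕ} (hρ : 1 ≤ ρ) (m : ℕ) : ∃ M, ∀ k, |bb P ρ m k| ≤ M := by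
  have key : ∀ j : ℕ, 1 ≤ j → |((Thq 0 0 : ℚ) : ℝ) - Th (1 / P * (1 / (j : ℝ)))| ≤
      12 * (1 / P + 3) ^ 2 * (1 + 1 / P) := by
    intro j hj
    have hj' : (1 : ℝ) ≤ j := by exact_mod_cast hj
    have hP' : 0 < 1 / P := by positivity
    have hd0 : 0 ≤ 1 / P * (1 / (j : ℝ)) := by positivity
    have hd : 1 / P * (1 / (j : ℝ)) ≤ 1 / P :=
      mul_le_of_le_one_right hP'.le (by rw [div_le_one (by linarith)]; exact hj')
    have := Thq_err (Z := 1 / P) (n := 0) (z := 0) le_rfl hd0 (by simpa using hP'.le) hd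
    refine this.trans ?_
    have e : |((0 : ℚ) : ℝ) - 1 / P * (1 / (j : ℝ))| ≤ 1 / P := by
      rw [Rat.cast_zero, zero_sub, abs_neg, abs_of_nonneg hd0]; exact hd
    have hpos : 0 ≤ 12 * (1 / P + 3) ^ 2 := by positivity
    apply mul_le_mul_of_nonneg_left _ hpos
    simpa using e
  refine ⟨12 * (1 / P + 3) ^ 2 * (1 + 1 / P) + 12 * (1 / P + 3) ^ 2 * (1 + 1 / P), fun k => ?_⟩
  have h1 := abs_le.1 (key (ρ * 4 ^ (2 ^ (k + m))) (Nat.mul_pos hρ (by positivity)))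
  have h2 := abs_le.1 (key ρ hρ)
  unfold bb
  rw [abs_le]
  constructor <;> linarith [h1.1, h1.2, h2.1, h2.2]

theorem chan {σ P : ℝ} (hσ : 0 < σ) (hP : 0 < P) {ρ m : ℕ} (hρ : 1 ≤ ρ)
    {d : ℕ → ℝ} {D : ℝ} (hd : HasSum d D)
    (hs : ∀ k, 1 ≤ σ * Lam ρ m k)
    (hp : ∀ k, 0 ≤ pw (fun k => d k / 2 ^ (k + m + 1)) k)
    (hp1 : HasSum (pw (fun k => d k / 2 ^ (k + m + 1))) 1) :
    Integrable (fun α => Real.logb 2 (1 + P * α ^ 2 / σ) *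
      mixf σ (Lam ρ m) (pw (fun k => d k / 2 ^ (k + m + 1))) α) ∧
    ∃ S, HasSum (fun k => d k / 2 ^ (k + m + 1) * bb P ρ m k) S ∧
      (∫ α, Real.logb 2 (1 + P * α ^ 2 / σ) *
        mixf σ (Lam ρ m) (pw (fun k => d k / 2 ^ (k + m + 1))) α) = Er (P * Lam ρ m 0) + D + S := by
  set c : ℕ → ℝ := fun k => d k / 2 ^ (k + m + 1) with hc
  obtain ⟨M, hM⟩ := bb_bound hP hρ m
  have hcs : HasSum c (∑' k, c k) := by
    have := (hasSum_nat_add_iff' 1).2 hp1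
    exact (show Summable c from this.summable).hasSum
  have hS : Summable (fun k => c k * bb P ρ m k) := by
    refine Summable.of_norm_bounded (g := fun k => c k * M) (hcs.summable.mul_right M) ?_
    intro k
    rw [norm_mul, Real.norm_of_nonneg (show 0 ≤ c k from hp (k + 1))]
    exact mul_le_mul_of_nonneg_left (hM k) (hp (k + 1))
  have hsum : HasSum (fun k => pw c k * Er (P * Lam ρ m k))
      (Er (P * Lam ρ m 0) + D + ∑' k, c k * bb P ρ m k) := by
    rw [← hasSum_nat_add_iff' 1]
    have := ((hcs.mul_right (Er (P * Lam ρ m 0))).add hd).add hS.hasSum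
    refine hasSum_cast this ?_ ?_
    · intro k
      rw [Er_diff hP hρ]
      have h2 : c k * 2 ^ (k + m + 1) = d k := by simp only [hc]; field_simp
      simp only [pw]
      rw [← h2]; ring
    · rw [Finset.sum_range_one]; simp only [pw]; ring
  have := mixf_log hσ (Lam_pos hρ m) hs hp hp1 hP hsum.summable
  exact ⟨this.1, _, hS.hasSum, this.2.unique hsum⟩

theorem incr {r : ℕ → ℚ} {X : ℝ} (hm : ∀ n, r n ≤ r (n + 1))
    (ht : Tendsto (fun n => (r n : ℝ)) atTop (nhds X)) :
    (∀ k, (0 : ℝ) ≤ (r (k + 1) : ℝ) - r k) ∧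
    HasSum (fun k => (r (k + 1) : ℝ) - r k) (X - r 0) ∧
    (∀ k, (r (k + 1) : ℝ) - r k ≤ X - r 0) := by
  have h0 : ∀ k, (0 : ℝ) ≤ (r (k + 1) : ℝ) - r k := fun k => by
    have : (r k : ℝ) ≤ r (k + 1) := by exact_mod_cast hm k
    linarith
  have hS : HasSum (fun k => (r (k + 1) : ℝ) - r k) (X - r 0) := by
    rw [hasSum_iff_tendsto_nat_of_nonneg h0]
    simp only [Finset.sum_range_sub (fun k => (r k : ℝ))]
    exact ht.sub_const _
  exact ⟨h0, hS, fun k => le_hasSum hS k (fun j _ => h0 j)⟩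

theorem c_le {d : ℕ → ℝ} {m : ℕ} (h : ∀ k, d k ≤ 2 ^ m) (k : ℕ) :
    d k / 2 ^ (k + m + 1) ≤ (1 / 2) ^ (k + 1) := by
  rw [div_le_iff₀ (by positivity)]
  have : (1 / 2 : ℝ) ^ (k + 1) * 2 ^ (k + m + 1) = 2 ^ m := by
    rw [show k + m + 1 = (k + 1) + m by ring, pow_add 2, ← mul_assoc, ← mul_pow]; norm_num
  rw [this]; exact h k

theorem bb_comp {P : ℝ} (hP : 0 < P) (hPc : IsComputableReal P) {ρ : ℕ} (hρ : 1 ≤ ρ) (m : ℕ) :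
    ∃ (A : ℕ → ℕ → ℚ) (C : ℝ), Computable₂ A ∧
      ∀ k n, |(A k n : ℝ) - bb P ρ m k| ≤ C * (1 / 2) ^ n := by
  obtain ⟨z, Z, C, hz, hZ, h⟩ := inv_comp hP hPc
  have hZ0 : 0 ≤ Z := le_trans (by positivity) hZ
  have key : ∀ n j : ℕ, 1 ≤ j →
      |((Thq n (z n * (1 / (j : ℚ))) : ℚ) : ℝ) - Th (1 / P * (1 / (j : ℝ)))| ≤
      12 * (Z + 3) ^ 2 * (1 + C) * (1 / 2) ^ n := by
    intro n j hj
    obtain ⟨a1, a2, a3⟩ := h n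
    have hj' : (1 : ℝ) ≤ j := by exact_mod_cast hj
    have hP' : 0 < 1 / P := by positivity
    have a1' : (0 : ℝ) ≤ z n := by exact_mod_cast a1
    have hjj : 1 / (j : ℝ) ≤ 1 := by rw [div_le_one (by linarith)]; exact hj'
    have hjp : 0 ≤ 1 / (j : ℝ) := by positivity
    have := Thq_err (Z := Z) (n := n) (z := z n * (1 / (j : ℚ))) (z' := 1 / P * (1 / (j : ℝ)))
      (mul_nonneg a1 (by positivity)) (by positivity)
      (by push_cast; exact (mul_le_of_le_one_right a1' hjj).trans a2)
      ((mul_le_of_le_one_right hP'.le hjj).trans hZ)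
    refine this.trans ?_
    rw [mul_assoc (12 * (Z + 3) ^ 2) (1 + C)]
    apply mul_le_mul_of_nonneg_left _ (by positivity)
    have e : |((z n * (1 / (j : ℚ)) : ℚ) : ℝ) - 1 / P * (1 / (j : ℝ))| ≤ C * (1 / 2) ^ n := by
      push_cast
      rw [← sub_mul, abs_mul, abs_of_nonneg hjp]
      exact (mul_le_of_le_one_right (abs_nonneg _) hjj).trans a3
    linarith
  refine ⟨fun k n => Thq n (z n * (1 / ((ρ * 4 ^ (2 ^ (k + m)) : ℕ) : ℚ))) -
    Thq n (z n * (1 / (ρ : ℚ))), 2 * (12 * (Z + 3) ^ 2 * (1 + C)), ?_, ?_⟩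
  · have hz2 : Computable (fun a : ℕ × ℕ => z a.2) := hz.comp Computable.snd
    refine cq_sub (Thq_comp Computable.snd (cq_mul hz2 (cq_inv_nat ?_ ?_)))
      (Thq_comp Computable.snd (cq_mul hz2 (cq_inv_nat (Computable.const ρ) (fun _ => hρ))))
    · exact c_mul (Computable.const ρ) (c_pow (Computable.const 4) (c_pow (Computable.const 2)
        (c_add Computable.fst (Computable.const m))))
    · intro t; exact Nat.mul_pos hρ (by positivity)
  · intro k n
    have h1 := abs_le.1 (key n (ρ * 4 ^ (2 ^ (k + m))) (Nat.mul_pos hρ (by positivity)))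
    have h2 := abs_le.1 (key n ρ hρ)
    unfold bb
    rw [Rat.cast_sub, abs_le]
    constructor <;> linarith [h1.1, h1.2, h2.1, h2.2]

/-- Theorem 1 of the paper: for any `x ∈ Δ₂`, `x > 0`, with `x ∉ Σ₁` and `x ∉ Π₁`,
and any computable noise powers `σ₁², σ₂² > 0`, there are continuous, even,
nonnegative integrable fading densities `f₁, f₂` vanishing on `[-1,1]` such that
for every computable power constraint `P > 0` the secrecy capacity
`C_S(P) = ∫ log₂(1 + Pα²/σ₁²) f₁ - ∫ log₂(1 + Pα²/σ₂²) f₂` equals `x + u(P)` for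
some computable real `u(P)`; hence `C_S(P) ∈ Δ₂ \ (Σ₁ ∪ Π₁)`. -/
theorem stmt4 (x x₁ x₂ : ℝ) (hxpos : 0 < x)
    (hx₁ : LeftComputable x₁) (hx₂ : LeftComputable x₂)
    (hx₁pos : 0 < x₁) (hx₂pos : 0 < x₂) (hxeq : x = x₁ - x₂)
    (hxnl : ¬ LeftComputable x) (hxnr : ¬ RightComputable x)
    (σ1sq σ2sq : ℝ) (hσ1 : 0 < σ1sq) (hσ2 : 0 < σ2sq)
    (hσ1c : IsComputableReal σ1sq) (hσ2c : IsComputableReal σ2sq) :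
    ∃ f₁ f₂ : ℝ → ℝ,
      Continuous f₁ ∧ Continuous f₂ ∧
      (∀ α, f₁ (-α) = f₁ α) ∧ (∀ α, f₂ (-α) = f₂ α) ∧
      (∀ α, 0 ≤ f₁ α) ∧ (∀ α, 0 ≤ f₂ α) ∧
      Integrable f₁ ∧ Integrable f₂ ∧
      (∀ α, |α| ≤ 1 → f₁ α = 0) ∧ (∀ α, |α| ≤ 1 → f₂ α = 0) ∧
      (∫ α, f₁ α) = 1 ∧ (∫ α, f₂ α) = 1 ∧
      ∀ P : ℝ, 0 < P → IsComputableReal P →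
        Integrable (fun α => Real.logb 2 (1 + P * α ^ 2 / σ1sq) * f₁ α) ∧
        Integrable (fun α => Real.logb 2 (1 + P * α ^ 2 / σ2sq) * f₂ α) ∧
        ∃ u : ℝ, IsComputableReal u ∧
          (∫ α, Real.logb 2 (1 + P * α ^ 2 / σ1sq) * f₁ α) -
              (∫ α, Real.logb 2 (1 + P * α ^ 2 / σ2sq) * f₂ α) = x + u ∧
          Delta2 ((∫ α, Real.logb 2 (1 + P * α ^ 2 / σ1sq) * f₁ α) -
              (∫ α, Real.logb 2 (1 + P * α ^ 2 / σ2sq) * f₂ α)) ∧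
          ¬ LeftComputable ((∫ α, Real.logb 2 (1 + P * α ^ 2 / σ1sq) * f₁ α) -
              (∫ α, Real.logb 2 (1 + P * α ^ 2 / σ2sq) * f₂ α)) ∧
          ¬ RightComputable ((∫ α, Real.logb 2 (1 + P * α ^ 2 / σ1sq) * f₁ α) -
              (∫ α, Real.logb 2 (1 + P * α ^ 2 / σ2sq) * f₂ α)) := by
  obtain ⟨r, hr, hrm, hrt⟩ := hx₁
  obtain ⟨s, hsc, hsm, hst⟩ := hx₂
  obtain ⟨d0, dS, dle⟩ := incr hrm hrt
  obtain ⟨e0, eS, ele⟩ := incr hsm hst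
  obtain ⟨m, hm⟩ := pow_unbounded_of_one_lt (max (x₁ - r 0) (x₂ - s 0)) (one_lt_two)
  obtain ⟨ρ, hρ⟩ := exists_nat_ge (1 + 1 / σ1sq + 1 / σ2sq)
  have i1 : 0 < 1 / σ1sq := by positivity
  have i2 : 0 < 1 / σ2sq := by positivity
  have hρ1 : 1 ≤ ρ := by
    have : (1 : ℝ) ≤ ρ := by linarith
    exact_mod_cast this
  have hs1 : ∀ k, 1 ≤ σ1sq * Lam ρ m k := fun k => by
    have h1 := (show 1 / σ1sq ≤ ρ by linarith).trans (Lam_ge ρ m k)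
    rw [div_le_iff₀ hσ1] at h1; linarith
  have hs2 : ∀ k, 1 ≤ σ2sq * Lam ρ m k := fun k => by
    have h1 := (show 1 / σ2sq ≤ ρ by linarith).trans (Lam_ge ρ m k)
    rw [div_le_iff₀ hσ2] at h1; linarith
  set d : ℕ → ℝ := fun k => (r (k + 1) : ℝ) - r k with hd
  set e : ℕ → ℝ := fun k => (s (k + 1) : ℝ) - s k with he
  have dm : ∀ k, d k ≤ 2 ^ m := fun k => (dle k).trans ((le_max_left _ _).trans hm.le)
  have em : ∀ k, e k ≤ 2 ^ m := fun k => (ele k).trans ((le_max_right _ _).trans hm.le)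
  have c0 : ∀ k, 0 ≤ d k / 2 ^ (k + m + 1) := fun k => div_nonneg (d0 k) (by positivity)
  have c0' : ∀ k, 0 ≤ e k / 2 ^ (k + m + 1) := fun k => div_nonneg (e0 k) (by positivity)
  obtain ⟨hp, hp1⟩ := pw_props c0 (c_le dm)
  obtain ⟨hp', hp1'⟩ := pw_props c0' (c_le em)
  refine ⟨mixf σ1sq (Lam ρ m) (pw (fun k => d k / 2 ^ (k + m + 1))),
    mixf σ2sq (Lam ρ m) (pw (fun k => e k / 2 ^ (k + m + 1))),
    mixf_cont hs1 hp hp1, mixf_cont hs2 hp' hp1', mixf_even, mixf_even,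
    mixf_nonneg hs1 hp, mixf_nonneg hs2 hp', (mixf_mass hs1 hp hp1).1, (mixf_mass hs2 hp' hp1').1,
    mixf_zero hs1, mixf_zero hs2, (mixf_mass hs1 hp hp1).2, (mixf_mass hs2 hp' hp1').2, ?_⟩
  intro P hP hPc
  obtain ⟨I1, S1, hS1, E1⟩ := chan hσ1 hP hρ1 dS hs1 hp hp1
  obtain ⟨I2, S2, hS2, E2⟩ := chan hσ2 hP hρ1 eS hs2 hp' hp1'
  obtain ⟨M, hM⟩ := bb_bound hP hρ1 m
  obtain ⟨A, C, hA, hAC⟩ := bb_comp hP hPc hρ1 m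
  have hu : IsComputableReal (((s 0 - r 0 : ℚ) : ℝ) + (S1 - S2)) := by
    refine sum_comp (a := fun k => ((r (k + 1) - r k) - (s (k + 1) - s k)) *
      (1 / ((2 ^ (k + m + 1) : ℕ) : ℚ))) (D := 1) ?_ hA ?_ hM hAC _ ?_
    · have hsucc : Computable (fun k : ℕ => k + 1) := Computable.succ
      exact cq_mul (cq_sub (cq_sub (hr.comp hsucc) hr) (cq_sub (hsc.comp hsucc) hsc))
        (cq_inv_nat (c_pow (Computable.const 2) (c_add (c_add Computable.id (Computable.const m))
          (Computable.const 1))) (fun _ => by positivity))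
    · intro k
      have h1 := c_le dm k
      have h2 := c_le em k
      have h3 := c0 k
      have h4 := c0' k
      have h5 : (1 / 2 : ℝ) ^ (k + 1) ≤ (1 / 2) ^ k :=
        pow_le_pow_of_le_one (by norm_num) (by norm_num) (by omega)
      have h6 : (((r (k + 1) - r k - (s (k + 1) - s k)) * (1 / ((2 ^ (k + m + 1) : ℕ) : ℚ)) : ℚ) : ℝ)
          = d k / 2 ^ (k + m + 1) - e k / 2 ^ (k + m + 1) := by
        simp only [hd, he]; push_cast; ring
      rw [h6, abs_le]
      constructor <;> linarith
    · refine hasSum_cast (hS1.sub hS2) (fun k => ?_) rfl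
      simp only [hd, he]; push_cast; ring
  have hC : (∫ α, Real.logb 2 (1 + P * α ^ 2 / σ1sq) *
        mixf σ1sq (Lam ρ m) (pw (fun k => d k / 2 ^ (k + m + 1))) α) -
      (∫ α, Real.logb 2 (1 + P * α ^ 2 / σ2sq) *
        mixf σ2sq (Lam ρ m) (pw (fun k => e k / 2 ^ (k + m + 1))) α) =
      x + (((s 0 - r 0 : ℚ) : ℝ) + (S1 - S2)) := by
    rw [E1, E2, hxeq]; push_cast; ring
  refine ⟨I1, I2, _, hu, hC, ?_, ?_, ?_⟩
  · rw [hC]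
    exact ⟨x₁ + (((s 0 - r 0 : ℚ) : ℝ) + (S1 - S2)), x₂, left_add ⟨r, hr, hrm, hrt⟩ hu,
      ⟨s, hsc, hsm, hst⟩, by rw [hxeq]; ring⟩
  · rw [hC]
    intro h
    have := left_add h (comp_neg hu)
    rw [add_neg_cancel_right] at this
    exact hxnl this
  · rw [hC]
    intro h
    have := left_add (right_iff.1 h) hu
    rw [neg_add, neg_add_cancel_right] at this
    exact hxnr (right_iff.2 this)
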